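/- Let G=(V,A) be a finite loopless digraph, r ∈ V, and T' a spanning out-tree of G rooted at r. Let (p,w) ∈ T' and let (q,w) ∈ A with q ≠ w such that q is not a descendant of w in T'. Then T'' := (T' \ {(p,w)}) ∪ {(q,w)} is again a spanning out-tree of G rooted at r. Moreover, if q is internal in T', then |leaves(T'')| ≥ |leaves(T')|. -/

import Mathlib

variable {V : Type*} [DecidableEq V] [Fintype V]

/-- The vertex set of an arc set `T` together with the root `r`. -/
def dverts (r : V) (T : Finset (V × V)) : Finset V :=
  insert r (T.image Prod.fst ∪ T.image Prod.snd)

/-- In-degree of `v` in the arc set `T`. -/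
def dInDeg (T : Finset (V × V)) (v : V) : ℕ :=
  (T.filter fun a => a.2 = v).card

/-- Out-degree of `v` in the arc set `T`. -/
def dOutDeg (T : Finset (V × V)) (v : V) : ℕ :=
  (T.filter fun a => a.1 = v).card

/-- Reachability by a directed path using only arcs of `T`. -/
def DReach (T : Finset (V × V)) (x y : V) : Prop :=
  Relation.ReflTransGen (fun a b => (a, b) ∈ T) x y

/-- A loopless arc set. -/
def DLoopless (A : Finset (V × V)) : Prop := ∀ a ∈ A, a.1 ≠ a.2

/-- `T` is an out-tree of the digraph with arc set `A`, rooted at `r`. -/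
def IsOutTree (A : Finset (V × V)) (r : V) (T : Finset (V × V)) : Prop :=
  T ⊆ A ∧ dInDeg T r = 0 ∧ (∀ v ∈ dverts r T, v ≠ r → dInDeg T v = 1) ∧
    ∀ v ∈ dverts r T, DReach T r v

/-- `T` is a spanning out-tree of the digraph with arc set `A`, rooted at `r`. -/
def IsSpanningOutTree (A : Finset (V × V)) (r : V) (T : Finset (V × V)) : Prop :=
  IsOutTree A r T ∧ dverts r T = Finset.univ

/-- The leaves of an out-tree: vertices of out-degree 0. -/
def dleaves (r : V) (T : Finset (V × V)) : Finset V :=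
  (dverts r T).filter fun v => dOutDeg T v = 0

/-!
Deleting `(p, w)` only disturbs paths through `w`. Since `q` is not a descendant of `w`, the old
path from `r` to `q` survives, so `w` is reached again through `(q, w)`, and with it everything
below `w`. Of all out-degrees only that of `q` can grow, so if `q` was already internal then every
leaf remains a leaf.
-/

section ArcSets

variable {α : Type*} [DecidableEq α] {T : Finset (α × α)} {p q r u v w x y : α}

theorem dInDeg_eq_zero_iff : dInDeg T v = 0 ↔ ∀ x, (x, v) ∉ T := by
  simp only [dInDeg, Finset.card_eq_zero, Finset.filter_eq_empty_iff]
  grind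

theorem dOutDeg_eq_zero_iff : dOutDeg T v = 0 ↔ ∀ y, (v, y) ∉ T := by
  simp only [dOutDeg, Finset.card_eq_zero, Finset.filter_eq_empty_iff]
  grind

theorem dInDeg_eq_one_iff : dInDeg T v = 1 ↔ ∃! x, (x, v) ∈ T := by
  simp only [dInDeg, Finset.card_eq_one, Finset.ext_iff, Finset.mem_filter, Finset.mem_singleton,
    Prod.forall, Prod.exists, Prod.mk.injEq]
  constructor
  · rintro ⟨x, y, h⟩
    obtain ⟨hxv, rfl⟩ := (h x y).2 ⟨rfl, rfl⟩
    exact ⟨x, hxv, fun z hz => ((h z y).1 ⟨hz, rfl⟩).1⟩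
  · rintro ⟨x, hx, huniq⟩
    exact ⟨x, v, by grind⟩

theorem mem_dverts_iff : v ∈ dverts r T ↔ v = r ∨ (∃ y, (v, y) ∈ T) ∨ ∃ x, (x, v) ∈ T := by
  simp [dverts]

theorem snd_mem_dverts (h : (x, v) ∈ T) : v ∈ dverts r T :=
  mem_dverts_iff.2 (.inr (.inr ⟨x, h⟩))

theorem DReach.mem_dverts (h : DReach T r v) : v ∈ dverts r T := by
  rcases Relation.ReflTransGen.cases_tail h with rfl | ⟨x, -, hxv⟩
  · exact mem_dverts_iff.2 (.inl rfl)
  · exact snd_mem_dverts hxv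

/-- The arc set obtained from `T` by moving `w` from its parent `p` to the new parent `q`. -/
def reparent (T : Finset (α × α)) (p q w : α) : Finset (α × α) :=
  insert (q, w) (T.erase (p, w))

theorem mem_reparent :
    (x, y) ∈ reparent T p q w ↔ (x = q ∧ y = w) ∨ ((x = p → y ≠ w) ∧ (x, y) ∈ T) := by
  simp [reparent]

theorem mem_reparent_of_ne (hv : v ≠ w) : (x, v) ∈ reparent T p q w ↔ (x, v) ∈ T := by
  simp [mem_reparent, hv]

theorem mem_reparent_self (hp : ∀ x, (x, w) ∈ T → x = p) :
    (x, w) ∈ reparent T p q w ↔ x = q := by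
  grind [mem_reparent]

theorem dverts_reparent_subset (hq : q ∈ dverts r T) (hw : w ∈ dverts r T) :
    dverts r (reparent T p q w) ⊆ dverts r T := by
  intro v
  grind [mem_dverts_iff, mem_reparent]

theorem DReach.reparent_of_not_dReach (hv : DReach T u v) (hwv : ¬ DReach T w v) :
    DReach (reparent T p q w) u v := by
  induction hv with
  | refl => exact .refl
  | @tail x v _ hxv ih =>
    have hne : v ≠ w := by rintro rfl; exact hwv .refl
    have hwx : ¬ DReach T w x := fun hwx => hwv (hwx.tail hxv)
    exact (ih hwx).tail ((mem_reparent_of_ne hne).2 hxv)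

theorem DReach.reparent (hv : DReach T u v) (hq : DReach T u q) (hwq : ¬ DReach T w q) :
    DReach (reparent T p q w) u v := by
  induction hv with
  | refl => exact .refl
  | @tail x v _ hxv ih =>
    by_cases hne : v = w
    · subst hne
      exact (hq.reparent_of_not_dReach hwq).tail (mem_reparent.2 (.inl ⟨rfl, rfl⟩))
    · exact ih.tail ((mem_reparent_of_ne hne).2 hxv)

theorem dleaves_subset_dleaves_reparent (hverts : dverts r T ⊆ dverts r (reparent T p q w))
    (hq : 1 ≤ dOutDeg T q) : dleaves r T ⊆ dleaves r (reparent T p q w) := by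
  intro v hv
  obtain ⟨hvT, hleaf⟩ := Finset.mem_filter.1 hv
  have hvq : v ≠ q := by rintro rfl; omega
  refine Finset.mem_filter.2 ⟨hverts hvT, dOutDeg_eq_zero_iff.2 fun y hy => ?_⟩
  exact dOutDeg_eq_zero_iff.1 hleaf y (by grind [mem_reparent])

end ArcSets

section OutTrees

variable {α : Type*} [DecidableEq α] {A T : Finset (α × α)} {p q r w : α}

theorem isOutTree_iff :
    IsOutTree A r T ↔ T ⊆ A ∧ (∀ x, (x, r) ∉ T) ∧
      (∀ v ∈ dverts r T, v ≠ r → ∃! x, (x, v) ∈ T) ∧ ∀ v ∈ dverts r T, DReach T r v := by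
  simp only [IsOutTree, dInDeg_eq_zero_iff, dInDeg_eq_one_iff]

theorem IsOutTree.dverts_reparent (hT : IsOutTree A r T) (hw : w ∈ dverts r T)
    (hq : q ∈ dverts r T) (hwq : ¬ DReach T w q) :
    dverts r (reparent T p q w) = dverts r T := by
  obtain ⟨-, -, -, hreach⟩ := hT
  exact (dverts_reparent_subset hq hw).antisymm fun v hv =>
    ((hreach v hv).reparent (hreach q hq) hwq).mem_dverts

theorem IsOutTree.reparent (hT : IsOutTree A r T) (hpw : (p, w) ∈ T) (hqw : (q, w) ∈ A)
    (hq : q ∈ dverts r T) (hwq : ¬ DReach T w q) : IsOutTree A r (reparent T p q w) := by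
  have hw : w ∈ dverts r T := snd_mem_dverts hpw
  have hverts := hT.dverts_reparent (p := p) hw hq hwq
  obtain ⟨hTA, hroot, hparent, hreach⟩ := isOutTree_iff.1 hT
  have hwr : w ≠ r := by rintro rfl; exact hroot p hpw
  have hp : ∀ x, (x, w) ∈ T → x = p := fun x hx => (hparent w hw hwr).unique hx hpw
  rw [isOutTree_iff, hverts]
  refine ⟨?_, ?_, fun v hv hvr => ?_, fun v hv => (hreach v hv).reparent (hreach q hq) hwq⟩
  · exact Finset.insert_subset hqw ((Finset.erase_subset _ _).trans hTA)
  · simpa only [mem_reparent_of_ne hwr.symm] using hroot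
  · by_cases hvw : v = w
    · subst hvw
      simp only [mem_reparent_self hp, existsUnique_eq]
    · simpa only [mem_reparent_of_ne hvw] using hparent v hv hvr

theorem stmt3_general (hT : IsOutTree A r T) (hpw : (p, w) ∈ T) (hqw : (q, w) ∈ A)
    (hq : q ∈ dverts r T) (hwq : ¬ DReach T w q) :
    IsOutTree A r (insert (q, w) (T.erase (p, w))) ∧
      dverts r (insert (q, w) (T.erase (p, w))) = dverts r T ∧
      (1 ≤ dOutDeg T q → dleaves r T ⊆ dleaves r (insert (q, w) (T.erase (p, w)))) := by
  have hw : w ∈ dverts r T := snd_mem_dverts hpw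
  have hverts := hT.dverts_reparent (p := p) hw hq hwq
  exact ⟨hT.reparent hpw hqw hq hwq, hverts, dleaves_subset_dleaves_reparent hverts.ge⟩

end OutTrees

theorem stmt3 (A T' : Finset (V × V)) (r p w q : V)
    (hA : DLoopless A) (hT' : IsSpanningOutTree A r T')
    (hpw : (p, w) ∈ T') (hqw : (q, w) ∈ A) (hq : q ≠ w)
    (hdesc : ¬ DReach T' w q) :
    IsSpanningOutTree A r (insert (q, w) (T'.erase (p, w))) ∧
      (1 ≤ dOutDeg T' q →
        (dleaves r T').card ≤
          (dleaves r (insert (q, w) (T'.erase (p, w)))).card) := by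
  obtain ⟨htree, hverts, hleaves⟩ := stmt3_general hT'.1 hpw hqw (hT'.2 ▸ Finset.mem_univ q) hdesc
  exact ⟨⟨htree, hverts.trans hT'.2⟩, fun hint => Finset.card_le_card (hleaves hint)⟩
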